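/- Let L ≥ 1, a < b with b − a ≥ 1, and ε > 0. Let S, S_0 ∈ Σ_L satisfy S(x) = S_0(x) for all x ∉ [a,b] and sup_{x ∈ [a,b]} |S(x) − S_0(x)| ≤ ε. Then |J(S) − J(S_0)| ≤ J(S_0) · (e^{4(b−a)ε} − 1). In particular, if a family (S_ε) satisfies these hypotheses for each ε > 0, then J(S_ε) → J(S_0) as ε → 0. -/

import Mathlib

open MeasureTheory Real Set Filter

noncomputable section

/-- `f` is Lipschitz with constant `L` and continuous. -/
def IsLip (L : ℝ) (f : ℝ → ℝ) : Prop :=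
  Continuous f ∧ ∀ x y : ℝ, |f x - f y| ≤ L * |x - y|

/-- The functional class `Σ_L`. -/
def SigmaL (L : ℝ) (S : ℝ → ℝ) : Prop :=
  IsLip L S ∧ (∀ z : ℝ, |z| ≤ L → |S z| ≤ L) ∧
  ∃ S' : ℝ → ℝ, ContinuousOn S' {x : ℝ | L ≤ |x|} ∧
    ∀ x : ℝ, L ≤ |x| → HasDerivAt S (S' x) x ∧ -L ≤ S' x ∧ S' x ≤ -(1/L)

/-- Normalizing constant of the ergodic density. -/
def qdenom (S : ℝ → ℝ) : ℝ := ∫ y : ℝ, Real.exp (2 * ∫ z in (0:ℝ)..y, S z)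

/-- The ergodic density `q_S`. -/
def qdens (S : ℝ → ℝ) (x : ℝ) : ℝ :=
  Real.exp (2 * ∫ z in (0:ℝ)..x, S z) / qdenom S

/-- `J(S) = ∫_a^b 1/q_S(u) du`. -/
def Jfun (a b : ℝ) (S : ℝ → ℝ) : ℝ := ∫ u in a..b, 1 / qdens S u

end

open scoped Topology

/-!
Write `w_S(y) = exp (2 ∫₀^y S)`, so that `J(S) = (∫ w_S) · ∫_a^b 1 / w_S`. For every `y` the
primitives of `S` and `T` from `0` to `y` differ by at most `δ = ‖S - T‖_{L¹}`; hence each of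
`w_S`, `w_T` is at most `e^{2δ}` times the other, and `J(S)`, `J(T)` are within a factor `e^{4δ}` of
each other, which bounds `|J(S) - J(T)|` by `J(T) (e^{4δ} - 1)`. A perturbation of size at most
`ε` supported on `[a, b]` has `δ ≤ (b - a) ε`. The drifts in `Σ_L` tend to `∓∞` at `±∞`, which
makes `w_S` decay exponentially, so the normalizing constants are finite.
-/

/-- The unnormalized ergodic density `exp (2 ∫₀^y S)` of the diffusion with drift `S`; dividing it
by its integral `qdenom S` gives `qdens S`. -/
noncomputable def ergodicWeight (S : ℝ → ℝ) (y : ℝ) : ℝ :=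
  exp (2 * ∫ z in (0 : ℝ)..y, S z)

lemma ergodicWeight_pos (S : ℝ → ℝ) (y : ℝ) : 0 < ergodicWeight S y :=
  exp_pos _

lemma ergodicWeight_neg (S : ℝ → ℝ) (y : ℝ) :
    ergodicWeight S (-y) = ergodicWeight (fun z => -S (-z)) y := by
  simp only [ergodicWeight, intervalIntegral.integral_neg, intervalIntegral.integral_comp_neg,
    neg_zero, intervalIntegral.integral_symm (-y) 0]

lemma intervalIntegrable_of_locallyIntegrable {E : Type*} [NormedAddCommGroup E] {f : ℝ → E}
    {μ : Measure ℝ} (hf : LocallyIntegrable f μ) (x y : ℝ) : IntervalIntegrable f μ x y :=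
  (hf.integrableOn_isCompact isCompact_uIcc).intervalIntegrable

lemma continuous_ergodicWeight {S : ℝ → ℝ} (hS : LocallyIntegrable S) :
    Continuous (ergodicWeight S) :=
  continuous_exp.comp (continuous_const.mul
    (intervalIntegral.continuous_primitive (intervalIntegrable_of_locallyIntegrable hS) 0))

lemma continuous_inv_ergodicWeight {S : ℝ → ℝ} (hS : LocallyIntegrable S) :
    Continuous fun u => (ergodicWeight S u)⁻¹ :=
  (continuous_ergodicWeight hS).inv₀ fun u => (ergodicWeight_pos S u).ne'

lemma integral_ergodicWeight_nonneg (S : ℝ → ℝ) : 0 ≤ ∫ y, ergodicWeight S y :=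
  integral_nonneg fun y => (ergodicWeight_pos S y).le

lemma integral_inv_ergodicWeight_nonneg {a b : ℝ} (hab : a ≤ b) (S : ℝ → ℝ) :
    0 ≤ ∫ u in a..b, (ergodicWeight S u)⁻¹ :=
  intervalIntegral.integral_nonneg hab fun u _ => (inv_pos.2 (ergodicWeight_pos S u)).le

lemma Jfun_eq_integral_mul_integral_inv (a b : ℝ) (S : ℝ → ℝ) :
    Jfun a b S = (∫ y, ergodicWeight S y) * ∫ u in a..b, (ergodicWeight S u)⁻¹ := by
  rw [← intervalIntegral.integral_const_mul]
  refine intervalIntegral.integral_congr fun u _ => ?_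
  rw [qdens, one_div_div, div_eq_mul_inv]
  rfl

lemma Jfun_nonneg {a b : ℝ} (hab : a ≤ b) (S : ℝ → ℝ) : 0 ≤ Jfun a b S := by
  rw [Jfun_eq_integral_mul_integral_inv]
  exact mul_nonneg (integral_ergodicWeight_nonneg S) (integral_inv_ergodicWeight_nonneg hab S)

/-! ### Stability of `J` in `L¹` -/

section Comparison

variable {S T : ℝ → ℝ}

lemma intervalIntegral_le_add_integral_abs_sub (hS : LocallyIntegrable S)
    (hT : LocallyIntegrable T) (hST : Integrable fun z => S z - T z) (x y : ℝ) :
    ∫ z in x..y, S z ≤ (∫ z in x..y, T z) + ∫ z, |S z - T z| := by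
  rw [← sub_le_iff_le_add', ← intervalIntegral.integral_sub
    (intervalIntegrable_of_locallyIntegrable hS x y)
    (intervalIntegrable_of_locallyIntegrable hT x y)]
  calc ∫ z in x..y, S z - T z
      ≤ ‖∫ z in x..y, S z - T z‖ := le_norm_self _
    _ ≤ ∫ z in uIoc x y, ‖S z - T z‖ := intervalIntegral.norm_integral_le_integral_norm_uIoc
    _ ≤ ∫ z, ‖S z - T z‖ :=
      setIntegral_le_integral hST.norm (Eventually.of_forall fun _ => norm_nonneg _)

lemma ergodicWeight_le_exp_mul (hS : LocallyIntegrable S) (hT : LocallyIntegrable T)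
    (hST : Integrable fun z => S z - T z) (y : ℝ) :
    ergodicWeight S y ≤ exp (2 * ∫ z, |S z - T z|) * ergodicWeight T y := by
  rw [ergodicWeight, ergodicWeight, ← exp_add, exp_le_exp]
  linarith [intervalIntegral_le_add_integral_abs_sub hS hT hST 0 y]

lemma integrable_ergodicWeight_of_le_mul {C : ℝ} (hS : LocallyIntegrable S)
    (hT : Integrable (ergodicWeight T)) (h : ∀ y, ergodicWeight S y ≤ C * ergodicWeight T y) :
    Integrable (ergodicWeight S) :=
  (hT.const_mul C).mono' (continuous_ergodicWeight hS).aestronglyMeasurable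
    (Eventually.of_forall fun y => by
      simpa only [norm_of_nonneg (ergodicWeight_pos S y).le] using h y)

lemma integral_inv_ergodicWeight_le_mul {a b C : ℝ} (hab : a ≤ b) (hS : LocallyIntegrable S)
    (hT : LocallyIntegrable T) (h : ∀ y, ergodicWeight T y ≤ C * ergodicWeight S y) :
    ∫ u in a..b, (ergodicWeight S u)⁻¹ ≤ C * ∫ u in a..b, (ergodicWeight T u)⁻¹ := by
  rw [← intervalIntegral.integral_const_mul]
  refine intervalIntegral.integral_mono_on hab
    ((continuous_inv_ergodicWeight hS).intervalIntegrable _ _)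
    ((continuous_const.mul (continuous_inv_ergodicWeight hT)).intervalIntegrable _ _) fun u _ => ?_
  rw [← div_eq_mul_inv, le_div_iff₀ (ergodicWeight_pos T u),
    inv_mul_le_iff₀ (ergodicWeight_pos S u), mul_comm]
  exact h u

lemma Jfun_le_sq_mul {a b C : ℝ} (hab : a ≤ b) (hS : LocallyIntegrable S)
    (hT : LocallyIntegrable T) (hwT : Integrable (ergodicWeight T))
    (hST : ∀ y, ergodicWeight S y ≤ C * ergodicWeight T y)
    (hTS : ∀ y, ergodicWeight T y ≤ C * ergodicWeight S y) :
    Jfun a b S ≤ C ^ 2 * Jfun a b T := by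
  have integral_le : ∫ y, ergodicWeight S y ≤ C * ∫ y, ergodicWeight T y := by
    rw [← integral_const_mul]
    exact integral_mono (integrable_ergodicWeight_of_le_mul hS hwT hST) (hwT.const_mul C) hST
  rw [Jfun_eq_integral_mul_integral_inv, Jfun_eq_integral_mul_integral_inv]
  calc (∫ y, ergodicWeight S y) * ∫ u in a..b, (ergodicWeight S u)⁻¹
      ≤ (C * ∫ y, ergodicWeight T y) * (C * ∫ u in a..b, (ergodicWeight T u)⁻¹) :=
        mul_le_mul integral_le (integral_inv_ergodicWeight_le_mul hab hS hT hTS)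
          (integral_inv_ergodicWeight_nonneg hab S)
          ((integral_ergodicWeight_nonneg S).trans integral_le)
    _ = C ^ 2 * ((∫ y, ergodicWeight T y) * ∫ u in a..b, (ergodicWeight T u)⁻¹) := by ring

lemma abs_sub_le_mul_sub_one {x y E : ℝ} (hE : 1 ≤ E) (hxy : x ≤ E * y) (hyx : y ≤ E * x) :
    |x - y| ≤ y * (E - 1) := by
  rcases le_total y x with h | h
  · rw [abs_of_nonneg (sub_nonneg.2 h)]
    linarith
  · rw [abs_sub_comm, abs_of_nonneg (sub_nonneg.2 h)]
    calc y - x ≤ x * (E - 1) := by linarith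
      _ ≤ y * (E - 1) := mul_le_mul_of_nonneg_right h (sub_nonneg.2 hE)

theorem abs_Jfun_sub_le {a b : ℝ} (hab : a ≤ b) (hS : LocallyIntegrable S)
    (hT : LocallyIntegrable T) (hwT : Integrable (ergodicWeight T))
    (hST : Integrable fun z => S z - T z) :
    |Jfun a b S - Jfun a b T| ≤ Jfun a b T * (exp (4 * ∫ z, |S z - T z|) - 1) := by
  have le_ST := ergodicWeight_le_exp_mul hS hT hST
  have le_TS : ∀ y, ergodicWeight T y ≤ exp (2 * ∫ z, |S z - T z|) * ergodicWeight S y := by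
    simpa only [abs_sub_comm] using
      ergodicWeight_le_exp_mul hT hS (by simpa only [neg_sub] using hST.fun_neg)
  have hwS := integrable_ergodicWeight_of_le_mul hS hwT le_ST
  have exp_sq : exp (2 * ∫ z, |S z - T z|) ^ 2 = exp (4 * ∫ z, |S z - T z|) := by
    rw [← exp_nat_mul]
    ring_nf
  rw [← exp_sq]
  refine abs_sub_le_mul_sub_one (one_le_pow₀ (one_le_exp ?_))
    (Jfun_le_sq_mul hab hS hT hwT le_ST le_TS) (Jfun_le_sq_mul hab hT hS hwS le_TS le_ST)
  positivity

end Comparison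

/-! ### Integrability of the ergodic weight -/

lemma integrableOn_Ioi_ergodicWeight {S : ℝ → ℝ} {c : ℝ} (hS : LocallyIntegrable S) (hc : 0 < c)
    (hdrift : ∀ᶠ x in atTop, S x ≤ -c) : IntegrableOn (ergodicWeight S) (Ioi 0) := by
  obtain ⟨R, hR⟩ := eventually_atTop.1 hdrift
  have hint := intervalIntegrable_of_locallyIntegrable hS
  have primitive_le : ∀ y ≥ R, ∫ z in (0 : ℝ)..y, S z ≤ (∫ z in (0 : ℝ)..R, S z) - c * (y - R) := by
    intro y hy
    have tail_le : ∫ z in R..y, S z ≤ ∫ _ in R..y, -c :=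
      intervalIntegral.integral_mono_on hy (hint R y) intervalIntegrable_const
        fun z hz => hR z hz.1
    rw [intervalIntegral.integral_const, smul_eq_mul] at tail_le
    linarith [intervalIntegral.integral_add_adjacent_intervals (hint 0 R) (hint R y)]
  refine integrable_of_isBigO_exp_neg (b := 2 * c) (by positivity)
    (continuous_ergodicWeight hS).continuousOn
    (Asymptotics.IsBigO.of_bound (exp (2 * ((∫ z in (0 : ℝ)..R, S z) + c * R))) ?_)
  filter_upwards [eventually_ge_atTop R] with y hy
  rw [norm_of_nonneg (ergodicWeight_pos S y).le, norm_of_nonneg (exp_pos _).le, ← exp_add,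
    ergodicWeight, exp_le_exp]
  linarith [primitive_le y hy]

lemma integrable_ergodicWeight_of_eventually {S : ℝ → ℝ} {c : ℝ} (hS : LocallyIntegrable S)
    (hc : 0 < c) (htop : ∀ᶠ x in atTop, S x ≤ -c) (hbot : ∀ᶠ x in atBot, c ≤ S x) :
    Integrable (ergodicWeight S) := by
  have locallyIntegrable_reflected : LocallyIntegrable fun z => S (-z) := by
    refine (locallyIntegrable_map_homeomorph (Homeomorph.neg ℝ)).1 ?_
    rwa [Homeomorph.coe_neg, Measure.map_neg_eq_self]
  have right : IntegrableOn (ergodicWeight S) (Ioi 0) := integrableOn_Ioi_ergodicWeight hS hc htop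
  have right_reflected : IntegrableOn (fun y => ergodicWeight S (-y)) (Ioi (-0)) := by
    simp only [ergodicWeight_neg, neg_zero]
    refine integrableOn_Ioi_ergodicWeight locallyIntegrable_reflected.neg hc ?_
    filter_upwards [tendsto_neg_atTop_atBot.eventually hbot] with x hx using neg_le_neg hx
  have left : IntegrableOn (ergodicWeight S) (Iio 0) := by
    simpa only [neg_neg] using right_reflected.comp_neg_Iio
  rw [← integrableOn_univ, ← Iio_union_Ici (a := (0 : ℝ)), integrableOn_union,
    integrableOn_Ici_iff_integrableOn_Ioi]
  exact ⟨left, right⟩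

lemma tendsto_atBot_of_hasDerivAt_le {f f' : ℝ → ℝ} {R m : ℝ} (hm : m < 0)
    (hf : ∀ x ≥ R, HasDerivAt f (f' x) x) (hf' : ∀ x ≥ R, f' x ≤ m) :
    Tendsto f atTop atBot := by
  have f_le : ∀ x ≥ R, f x ≤ f R + m * (x - R) := by
    intro x hx
    rw [← sub_le_iff_le_add']
    refine (convex_Ici R).image_sub_le_mul_sub_of_deriv_le
      (fun y hy => (hf y hy).continuousAt.continuousWithinAt)
      (fun y hy => (hf y (interior_subset hy)).differentiableAt.differentiableWithinAt)
      (fun y hy => ?_) R self_mem_Ici x hx hx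
    rw [(hf y (interior_subset hy)).deriv]
    exact hf' y (interior_subset hy)
  refine tendsto_atBot_mono' atTop ((eventually_ge_atTop R).mono f_le) ?_
  exact tendsto_atBot_add_const_left _ _
    ((tendsto_atTop_add_const_right _ _ tendsto_id).const_mul_atTop_of_neg hm)

namespace SigmaL

variable {L : ℝ} {S : ℝ → ℝ}

lemma locallyIntegrable (hS : SigmaL L S) : LocallyIntegrable S :=
  hS.1.1.locallyIntegrable

lemma tendsto_atTop (hL : 0 < L) (hS : SigmaL L S) : Tendsto S atTop atBot := by
  obtain ⟨-, -, S', -, hS'⟩ := hS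
  have mem_tail : ∀ x ≥ L, L ≤ |x| := fun x hx => hx.le.trans (le_abs_self x)
  exact tendsto_atBot_of_hasDerivAt_le (neg_neg_of_pos (one_div_pos.2 hL))
    (fun x hx => (hS' x (mem_tail x hx)).1) fun x hx => (hS' x (mem_tail x hx)).2.2

lemma tendsto_atBot (hL : 0 < L) (hS : SigmaL L S) : Tendsto S atBot atTop := by
  obtain ⟨-, -, S', -, hS'⟩ := hS
  have mem_tail : ∀ x ≥ L, L ≤ |-x| := fun x hx => abs_neg x ▸ hx.le.trans (le_abs_self x)
  have hasDerivAt_reflected (x : ℝ) (hx : x ≥ L) :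
      HasDerivAt (fun x => -S (-x)) (S' (-x)) x := by
    simpa using ((hS' (-x) (mem_tail x hx)).1.comp x (hasDerivAt_neg x)).fun_neg
  have tendsto_reflected : Tendsto (fun x => -S (-x)) atTop atBot :=
    tendsto_atBot_of_hasDerivAt_le (neg_neg_of_pos (one_div_pos.2 hL)) hasDerivAt_reflected
      fun x hx => (hS' (-x) (mem_tail x hx)).2.2
  simpa only [Function.comp_def, neg_neg] using
    tendsto_neg_atBot_atTop.comp (tendsto_reflected.comp tendsto_neg_atBot_atTop)

lemma integrable_ergodicWeight (hL : 0 < L) (hS : SigmaL L S) : Integrable (ergodicWeight S) :=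
  integrable_ergodicWeight_of_eventually hS.locallyIntegrable one_pos
    ((hS.tendsto_atTop hL).eventually_le_atBot (-1))
    ((hS.tendsto_atBot hL).eventually_ge_atTop 1)

end SigmaL

/-! ### Perturbations supported on `[a, b]` -/

section Perturbation

variable {S T : ℝ → ℝ}

lemma integrable_sub_of_eqOn_compl_Icc {a b : ℝ} (hS : LocallyIntegrable S)
    (hT : LocallyIntegrable T) (heq : EqOn S T (Icc a b)ᶜ) :
    Integrable fun z => S z - T z :=
  (integrableOn_iff_integrable_of_support_subset (s := Icc a b)
    fun _ hx => not_not.1 fun hxab => hx (sub_eq_zero.2 (heq hxab))).1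
    ((hS.sub hT).integrableOn_isCompact isCompact_Icc)

lemma integral_abs_sub_le_of_eqOn_compl_Icc {a b ε : ℝ} (hab : a ≤ b)
    (heq : EqOn S T (Icc a b)ᶜ) (hle : ∀ x ∈ Icc a b, |S x - T x| ≤ ε) :
    ∫ z, |S z - T z| ≤ (b - a) * ε := by
  rw [← setIntegral_eq_integral_of_forall_compl_eq_zero (s := Icc a b)
    fun _ hx => by rw [heq hx, sub_self, abs_zero]]
  calc ∫ z in Icc a b, |S z - T z|
      ≤ ‖∫ z in Icc a b, |S z - T z|‖ := le_norm_self _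
    _ ≤ ε * volume.real (Icc a b) :=
      norm_setIntegral_le_of_norm_le_const measure_Icc_lt_top fun x hx => by
        simpa only [norm_eq_abs, abs_abs] using hle x hx
    _ = (b - a) * ε := by rw [volume_real_Icc_of_le hab, mul_comm]

lemma abs_Jfun_sub_le_of_eqOn_compl_Icc {a b ε : ℝ} (hab : a ≤ b) (hS : LocallyIntegrable S)
    (hT : LocallyIntegrable T) (hwT : Integrable (ergodicWeight T))
    (heq : EqOn S T (Icc a b)ᶜ) (hle : ∀ x ∈ Icc a b, |S x - T x| ≤ ε) :
    |Jfun a b S - Jfun a b T| ≤ Jfun a b T * (exp (4 * (b - a) * ε) - 1) := by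
  have hJ := Jfun_nonneg hab T
  calc |Jfun a b S - Jfun a b T|
      ≤ Jfun a b T * (exp (4 * ∫ z, |S z - T z|) - 1) :=
        abs_Jfun_sub_le hab hS hT hwT (integrable_sub_of_eqOn_compl_Icc hS hT heq)
    _ ≤ Jfun a b T * (exp (4 * ((b - a) * ε)) - 1) := by
        gcongr
        exact integral_abs_sub_le_of_eqOn_compl_Icc hab heq hle
    _ = Jfun a b T * (exp (4 * (b - a) * ε) - 1) := by rw [mul_assoc]

end Perturbation

theorem stmt16_general {a b : ℝ} (hab : a ≤ b) {S0 : ℝ → ℝ} (hS0 : LocallyIntegrable S0)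
    (hw : Integrable (ergodicWeight S0)) :
    (∀ ε : ℝ, ∀ S : ℝ → ℝ, LocallyIntegrable S →
      (∀ x ∉ Icc a b, S x = S0 x) →
      (∀ x ∈ Icc a b, |S x - S0 x| ≤ ε) →
      |Jfun a b S - Jfun a b S0| ≤ Jfun a b S0 * (exp (4 * (b - a) * ε) - 1)) ∧
    ∀ Sfam : ℝ → ℝ → ℝ,
      (∀ ε : ℝ, 0 < ε → LocallyIntegrable (Sfam ε) ∧
        (∀ x ∉ Icc a b, Sfam ε x = S0 x) ∧
        (∀ x ∈ Icc a b, |Sfam ε x - S0 x| ≤ ε)) →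
      Tendsto (fun ε : ℝ => Jfun a b (Sfam ε)) (𝓝[>] 0) (𝓝 (Jfun a b S0)) := by
  refine ⟨fun ε S hS heq hle => abs_Jfun_sub_le_of_eqOn_compl_Icc hab hS hS0 hw heq hle,
    fun Sfam hfam => ?_⟩
  have bound_tendsto :
      Tendsto (fun ε => Jfun a b S0 * (exp (4 * (b - a) * ε) - 1)) (𝓝[>] 0) (𝓝 0) := by
    have : Continuous fun ε => Jfun a b S0 * (exp (4 * (b - a) * ε) - 1) := by fun_prop
    simpa using (this.tendsto 0).mono_left nhdsWithin_le_nhds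
  refine tendsto_iff_norm_sub_tendsto_zero.2
    (squeeze_zero' (Eventually.of_forall fun _ => norm_nonneg _) ?_ bound_tendsto)
  filter_upwards [self_mem_nhdsWithin] with ε hε
  obtain ⟨hS, heq, hle⟩ := hfam ε hε
  exact abs_Jfun_sub_le_of_eqOn_compl_Icc hab hS hS0 hw heq hle

/-- under the hypotheses of Statement 15,
`|J(S) − J(S_0)| ≤ J(S_0)(e^{4(b−a)ε} − 1)`; consequently for any family
`(S_ε)_{ε>0}` satisfying these hypotheses, `J(S_ε) → J(S_0)` as `ε → 0+`. -/
theorem stmt16 (L a b : ℝ) (hL : 1 ≤ L) (hab : a < b) (hba : 1 ≤ b - a)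
    (S0 : ℝ → ℝ) (hS0 : SigmaL L S0) :
    (∀ ε : ℝ, 0 < ε → ∀ S : ℝ → ℝ, SigmaL L S →
      (∀ x ∉ Set.Icc a b, S x = S0 x) →
      (∀ x ∈ Set.Icc a b, |S x - S0 x| ≤ ε) →
      |Jfun a b S - Jfun a b S0| ≤ Jfun a b S0 * (Real.exp (4 * (b - a) * ε) - 1)) ∧
    ∀ Sfam : ℝ → ℝ → ℝ,
      (∀ ε : ℝ, 0 < ε → SigmaL L (Sfam ε) ∧
        (∀ x ∉ Set.Icc a b, Sfam ε x = S0 x) ∧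
        (∀ x ∈ Set.Icc a b, |Sfam ε x - S0 x| ≤ ε)) →
      Filter.Tendsto (fun ε : ℝ => Jfun a b (Sfam ε))
        (nhdsWithin 0 (Set.Ioi 0)) (nhds (Jfun a b S0)) := by
  have general := stmt16_general hab.le hS0.locallyIntegrable
    (hS0.integrable_ergodicWeight (one_pos.trans_le hL))
  exact ⟨fun ε _ S hS => general.1 ε S hS.locallyIntegrable,
    fun Sfam hfam => general.2 Sfam fun ε hε => (hfam ε hε).imp_left SigmaL.locallyIntegrable⟩
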